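/- Let A and B be 4×4 matrices with entries in R, with two-spin tensor components a_{κ,λ} and b_{κ,λ}. Then for all k,m ∈ {1,2,3}, the entangled dyadic component of the product satisfies Tr((σ_k ⊗ σ_m) AB) = (1/4)[ a_{0,0} b_{k,m} + a_{k,m} b_{0,0} + a_{k,0} b_{0,m} + a_{0,m} b_{k,0} + i ε_{k k₁ k₂}( a_{k₁,0} b_{k₂,m} + a_{k₁,m} b_{k₂,0} ) + i ε_{m m₁ m₂}( a_{0,m₁} b_{k,m₂} + a_{k,m₁} b_{0,m₂} ) − ε_{k k₁ k₂} ε_{m m₁ m₂} a_{k₁,m₁} b_{k₂,m₂} ]. -/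

import Mathlib

open Matrix Kronecker

/-- The Pauli matrices `σ₀ = I₂, σ₁, σ₂, σ₃`, with complex entries regarded as
elements of an associative unital `ℂ`-algebra `R` via the algebra map. -/
noncomputable def pauli (R : Type*) [Ring R] [Algebra ℂ R] : Fin 4 → Matrix (Fin 2) (Fin 2) R
  | 0 => !![1, 0; 0, 1]
  | 1 => !![0, 1; 1, 0]
  | 2 => !![0, -(algebraMap ℂ R Complex.I); algebraMap ℂ R Complex.I, 0]
  | 3 => !![1, 0; 0, -1]

/-- The Levi-Civita symbol `ε_{ijk}` on indices in `{1,2,3}` (represented by `Fin 3`). -/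
def eps (i j k : Fin 3) : ℤ :=
  ((j.val : ℤ) - i.val) * ((k.val : ℤ) - i.val) * ((k.val : ℤ) - j.val) / 2

/-- Single-spin component `Tr(σ_κ M)`. -/
noncomputable def tcomp (R : Type*) [Ring R] [Algebra ℂ R] (κ : Fin 4)
    (M : Matrix (Fin 2) (Fin 2) R) : R := (pauli R κ * M).trace

/-- A two-spin matrix viewed as a `2×2` matrix of `2×2` blocks. -/
def blk (R : Type*) (A : Matrix (Fin 2 × Fin 2) (Fin 2 × Fin 2) R) :
    Matrix (Fin 2) (Fin 2) (Matrix (Fin 2) (Fin 2) R) :=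
  Matrix.of fun i j => Matrix.of fun x y => A (i, x) (j, y)

/-- Partial trace `Tr₁((σ_κ ⊗ 1) A)` over the first spin. -/
noncomputable def ptr (R : Type*) [Ring R] [Algebra ℂ R] (κ : Fin 4)
    (A : Matrix (Fin 2 × Fin 2) (Fin 2 × Fin 2) R) : Matrix (Fin 2) (Fin 2) R :=
  tcomp (Matrix (Fin 2) (Fin 2) R) κ (blk R A)

theorem algI_mul (R : Type*) [Ring R] [Algebra ℂ R] (x : R) :
    algebraMap ℂ R Complex.I * x = Complex.I • x := (Algebra.smul_def _ _).symm

theorem tcomp_add (R : Type*) [Ring R] [Algebra ℂ R] (κ : Fin 4)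
    (M N : Matrix (Fin 2) (Fin 2) R) : tcomp R κ (M + N) = tcomp R κ M + tcomp R κ N := by
  simp [tcomp, Matrix.mul_add]

theorem tcomp_neg (R : Type*) [Ring R] [Algebra ℂ R] (κ : Fin 4)
    (M : Matrix (Fin 2) (Fin 2) R) : tcomp R κ (-M) = - tcomp R κ M := by
  simp [tcomp]

theorem tcomp_smul (R : Type*) [Ring R] [Algebra ℂ R] (κ : Fin 4) (c : ℂ)
    (M : Matrix (Fin 2) (Fin 2) R) : tcomp R κ (c • M) = c • tcomp R κ M := by
  simp [tcomp]

theorem tcomp_formulas (R : Type*) [Ring R] [Algebra ℂ R] (M : Matrix (Fin 2) (Fin 2) R) :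
    tcomp R 0 M = M 0 0 + M 1 1 ∧ tcomp R 1 M = M 1 0 + M 0 1 ∧
    tcomp R 2 M = Complex.I • M 0 1 - Complex.I • M 1 0 ∧ tcomp R 3 M = M 0 0 - M 1 1 := by
  refine ⟨?_, ?_, ?_, ?_⟩ <;>
    simp [tcomp, pauli, Matrix.trace, Matrix.vecMul, dotProduct, Fin.sum_univ_two, algI_mul] <;> abel

theorem tcomp_mul (R : Type*) [Ring R] [Algebra ℂ R] (M N : Matrix (Fin 2) (Fin 2) R) :
    tcomp R 0 (M * N) = (1/2 : ℂ) • (tcomp R 0 M * tcomp R 0 N + tcomp R 1 M * tcomp R 1 N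
      + tcomp R 2 M * tcomp R 2 N + tcomp R 3 M * tcomp R 3 N) ∧
    tcomp R 1 (M * N) = (1/2 : ℂ) • (tcomp R 0 M * tcomp R 1 N + tcomp R 1 M * tcomp R 0 N
      + Complex.I • (tcomp R 2 M * tcomp R 3 N - tcomp R 3 M * tcomp R 2 N)) ∧
    tcomp R 2 (M * N) = (1/2 : ℂ) • (tcomp R 0 M * tcomp R 2 N + tcomp R 2 M * tcomp R 0 N
      + Complex.I • (tcomp R 3 M * tcomp R 1 N - tcomp R 1 M * tcomp R 3 N)) ∧
    tcomp R 3 (M * N) = (1/2 : ℂ) • (tcomp R 0 M * tcomp R 3 N + tcomp R 3 M * tcomp R 0 N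
      + Complex.I • (tcomp R 1 M * tcomp R 2 N - tcomp R 2 M * tcomp R 1 N)) := by
  simp only [(tcomp_formulas R _).1, (tcomp_formulas R _).2.1, (tcomp_formulas R _).2.2.1,
    (tcomp_formulas R _).2.2.2, Matrix.mul_apply, Fin.sum_univ_two, mul_add, add_mul, mul_sub,
    sub_mul, smul_mul_assoc, mul_smul_comm, smul_add, smul_sub, smul_smul, Complex.I_mul_I]
  refine ⟨?_, ?_, ?_, ?_⟩ <;> match_scalars <;> ring_nf

theorem tcomp_ptr (R : Type*) [Ring R] [Algebra ℂ R] (κ μ : Fin 4)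
    (A : Matrix (Fin 2 × Fin 2) (Fin 2 × Fin 2) R) :
    ((pauli R κ ⊗ₖ pauli R μ) * A).trace = tcomp R μ (ptr R κ A) := by
  obtain ⟨f0, f1, f2, f3⟩ := tcomp_formulas (Matrix (Fin 2) (Fin 2) R) (blk R A)
  obtain ⟨g0, g1, g2, g3⟩ := tcomp_formulas R (ptr R κ A)
  fin_cases κ <;> fin_cases μ <;>
    simp only [Fin.mk_zero, Fin.mk_one, Fin.reduceFinMk, Fin.zero_eta] at g0 g1 g2 g3 ⊢ <;>
    simp only [g0, g1, g2, g3] <;>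
    simp only [ptr, f0, f1, f2, f3] <;>
    simp [blk, pauli, Matrix.trace, Matrix.mul_apply, Fintype.sum_prod_type,
      Fin.sum_univ_two, algI_mul, smul_smul, smul_add, smul_sub] <;>
    abel

theorem blk_mul (R : Type*) [Ring R]
    (A B : Matrix (Fin 2 × Fin 2) (Fin 2 × Fin 2) R) :
    blk R (A * B) = blk R A * blk R B := by
  ext i j x y
  simp [blk, Matrix.mul_apply, Fintype.sum_prod_type]

theorem ptr_mul (R : Type*) [Ring R] [Algebra ℂ R]
    (A B : Matrix (Fin 2 × Fin 2) (Fin 2 × Fin 2) R) :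
    ptr R 1 (A * B) = (1/2 : ℂ) • (ptr R 0 A * ptr R 1 B + ptr R 1 A * ptr R 0 B
      + Complex.I • (ptr R 2 A * ptr R 3 B - ptr R 3 A * ptr R 2 B)) ∧
    ptr R 2 (A * B) = (1/2 : ℂ) • (ptr R 0 A * ptr R 2 B + ptr R 2 A * ptr R 0 B
      + Complex.I • (ptr R 3 A * ptr R 1 B - ptr R 1 A * ptr R 3 B)) ∧
    ptr R 3 (A * B) = (1/2 : ℂ) • (ptr R 0 A * ptr R 3 B + ptr R 3 A * ptr R 0 B
      + Complex.I • (ptr R 1 A * ptr R 2 B - ptr R 2 A * ptr R 1 B)) := by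
  unfold ptr
  rw [blk_mul]
  exact (tcomp_mul _ _ _).2

/-- Entangled dyadic component of the product of two 4×4 matrices over a `ℂ`-algebra,
including the doubly entangled torque term with two Levi-Civita symbols. -/
theorem two_spin_product_dyadic (R : Type*) [Ring R] [Algebra ℂ R]
    (A B : Matrix (Fin 2 × Fin 2) (Fin 2 × Fin 2) R) (a b : Fin 4 → Fin 4 → R)
    (ha : ∀ κ μ : Fin 4, a κ μ = ((pauli R κ ⊗ₖ pauli R μ) * A).trace)
    (hb : ∀ κ μ : Fin 4, b κ μ = ((pauli R κ ⊗ₖ pauli R μ) * B).trace) :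
    ∀ k m : Fin 3,
      ((pauli R k.succ ⊗ₖ pauli R m.succ) * (A * B)).trace =
        (1/4 : ℂ) •
          (a 0 0 * b k.succ m.succ + a k.succ m.succ * b 0 0
            + a k.succ 0 * b 0 m.succ + a 0 m.succ * b k.succ 0
            + algebraMap ℂ R Complex.I *
                ∑ k₁ : Fin 3, ∑ k₂ : Fin 3,
                  ((eps k k₁ k₂ : ℤ) : R) *
                    (a k₁.succ 0 * b k₂.succ m.succ + a k₁.succ m.succ * b k₂.succ 0)
            + algebraMap ℂ R Complex.I *
                ∑ m₁ : Fin 3, ∑ m₂ : Fin 3,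
                  ((eps m m₁ m₂ : ℤ) : R) *
                    (a 0 m₁.succ * b k.succ m₂.succ + a k.succ m₁.succ * b 0 m₂.succ)
            - ∑ k₁ : Fin 3, ∑ k₂ : Fin 3, ∑ m₁ : Fin 3, ∑ m₂ : Fin 3,
                ((eps k k₁ k₂ : ℤ) : R) * ((eps m m₁ m₂ : ℤ) : R) *
                  (a k₁.succ m₁.succ * b k₂.succ m₂.succ)) := by
  simp only [tcomp_ptr] at ha hb ⊢
  intro k m
  simp only [← ha, ← hb, algI_mul]
  obtain ⟨h1, h2, h3⟩ := ptr_mul R A B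
  have e1 : (0 : Fin 3).succ = 1 := rfl
  have e2 : (1 : Fin 3).succ = 2 := rfl
  have e3 : (2 : Fin 3).succ = 3 := rfl
  obtain ⟨p000, p001, p002, p010, p011, p012, p020, p021, p022⟩ :
    eps 0 0 0 = 0 ∧ eps 0 0 1 = 0 ∧ eps 0 0 2 = 0 ∧ eps 0 1 0 = 0 ∧ eps 0 1 1 = 0 ∧
    eps 0 1 2 = 1 ∧ eps 0 2 0 = 0 ∧ eps 0 2 1 = -1 ∧ eps 0 2 2 = 0 := by decide
  obtain ⟨p100, p101, p102, p110, p111, p112, p120, p121, p122⟩ :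
    eps 1 0 0 = 0 ∧ eps 1 0 1 = 0 ∧ eps 1 0 2 = -1 ∧ eps 1 1 0 = 0 ∧ eps 1 1 1 = 0 ∧
    eps 1 1 2 = 0 ∧ eps 1 2 0 = 1 ∧ eps 1 2 1 = 0 ∧ eps 1 2 2 = 0 := by decide
  obtain ⟨p200, p201, p202, p210, p211, p212, p220, p221, p222⟩ :
    eps 2 0 0 = 0 ∧ eps 2 0 1 = 1 ∧ eps 2 0 2 = 0 ∧ eps 2 1 0 = -1 ∧ eps 2 1 1 = 0 ∧
    eps 2 1 2 = 0 ∧ eps 2 2 0 = 0 ∧ eps 2 2 1 = 0 ∧ eps 2 2 2 = 0 := by decide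
  fin_cases k <;> fin_cases m <;>
    simp only [Fin.mk_zero, Fin.mk_one, Fin.reduceFinMk, Fin.zero_eta, e1, e2, e3, h1, h2, h3,
      tcomp_smul, tcomp_add, tcomp_neg, sub_eq_add_neg,
      (tcomp_mul R _ _).1, (tcomp_mul R _ _).2.1, (tcomp_mul R _ _).2.2.1,
      (tcomp_mul R _ _).2.2.2, ← ha, ← hb, Fin.sum_univ_three,
      p000, p001, p002, p010, p011, p012, p020, p021, p022,
      p100, p101, p102, p110, p111, p112, p120, p121, p122,
      p200, p201, p202, p210, p211, p212, p220, p221, p222,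
      Int.cast_zero, Int.cast_one, Int.cast_neg, zero_mul, mul_zero, one_mul, neg_mul, mul_neg,
      neg_neg, neg_zero, add_zero, zero_add, mul_one]
  all_goals
    match_scalars <;> ring_nf <;> simp only [Complex.I_sq] <;> ring_nf
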